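/- The quotient of the direct product A(D4) × ℤ² by the normal closure of the single element (((a1*a2*a3*b)^3)⁻¹, u1*u2), where u1, u2 is the standard basis of ℤ², is isomorphic to A(D4) × ℤ. -/

import Mathlib

/-- Relations of the Artin group of type `D₄` on generators `a1 = of 0`, `a2 = of 1`,
`a3 = of 2`, `b = of 3`: the `aᵢ` pairwise commute and each `aᵢ` braids with `b`. -/
def AD4rels : Set (FreeGroup (Fin 4)) :=
  {FreeGroup.of 0 * FreeGroup.of 1 * (FreeGroup.of 1 * FreeGroup.of 0)⁻¹,
   FreeGroup.of 0 * FreeGroup.of 2 * (FreeGroup.of 2 * FreeGroup.of 0)⁻¹,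
   FreeGroup.of 1 * FreeGroup.of 2 * (FreeGroup.of 2 * FreeGroup.of 1)⁻¹,
   FreeGroup.of 0 * FreeGroup.of 3 * FreeGroup.of 0 *
      (FreeGroup.of 3 * FreeGroup.of 0 * FreeGroup.of 3)⁻¹,
   FreeGroup.of 1 * FreeGroup.of 3 * FreeGroup.of 1 *
      (FreeGroup.of 3 * FreeGroup.of 1 * FreeGroup.of 3)⁻¹,
   FreeGroup.of 2 * FreeGroup.of 3 * FreeGroup.of 2 *
      (FreeGroup.of 3 * FreeGroup.of 2 * FreeGroup.of 3)⁻¹}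

/-- The Artin group of type `D₄`, as a presented group. -/
abbrev AD4 : Type := PresentedGroup AD4rels

/-- The standard basis of the free abelian group `ℤ²` (written multiplicatively). -/
def u (i : Fin 2) : Multiplicative (Fin 2 → ℤ) := Multiplicative.ofAdd (Pi.single i 1)

/-- The fundamental element `Δ = (a1 a2 a3 b)^3` of `A(D₄)`. -/
def Δ : AD4 :=
  (PresentedGroup.of 0 * PresentedGroup.of 1 * PresentedGroup.of 2 * PresentedGroup.of 3) ^ 3

/-- The normal closure of the single element `(Δ⁻¹, u₁ u₂)` in `A(D₄) × ℤ²`. -/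
def N : Subgroup (AD4 × Multiplicative (Fin 2 → ℤ)) :=
  Subgroup.normalClosure {(Δ⁻¹, u 0 * u 1)}

instance : N.Normal := Subgroup.normalClosure_normal

/-!
If `z` is central in `G`, the automorphism `(g, v) ↦ (g * z ^ v₀, v)` of `G × ℤ²` carries
`(z⁻¹, u₀ u₁)` to `(1, u₀ u₁)`, so killing the former leaves `G × ℤ² / ⟨u₀ u₁⟩`, and
`ℤ² / ⟨u₀ u₁⟩` is `ℤ` via `v ↦ v₁ - v₀`.

That `Δ` is central in `A(D₄)` comes from folding: if `p` and `q` are two of the three legs, the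
element `s = p q` satisfies the relation `s b s b = b s b s` of type `B₂`, and the third leg `r`
then forms with `s` and `b` a configuration of type `B₃`, in which `(r s b)³` commutes with `r`.
-/

section Braid

/-- The braid relation of length three, satisfied in an Artin group by two generators joined by an
unlabelled edge. -/
def BraidRel {M : Type*} [Mul M] (x y : M) : Prop := x * y * x = y * x * y

variable {M : Type*} [Monoid M] {r s p q b : M}

theorem BraidRel.sq_mul_mul_eq (hp : BraidRel p b) (hq : BraidRel q b) (hpq : Commute p q) :
    (p * q * b) ^ 2 = (b * (p * q)) ^ 2 := by
  symm
  calc (b * (p * q)) ^ 2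
      = b * p * (q * b * (p * q)) := by simp only [sq, mul_assoc]
    _ = b * p * (q * b * q) * p := by rw [hpq.eq]; simp only [mul_assoc]
    _ = (b * p * b) * q * b * p := by rw [hq]; simp only [mul_assoc]
    _ = p * b * (p * q) * b * p := by rw [← hp]; simp only [mul_assoc]
    _ = p * b * q * (p * b * p) := by rw [hpq.eq]; simp only [mul_assoc]
    _ = p * (b * q * b) * p * b := by rw [hp]; simp only [mul_assoc]
    _ = p * q * b * (q * p) * b := by rw [← hq]; simp only [mul_assoc]
    _ = (p * q * b) ^ 2 := by rw [← hpq.eq]; simp only [sq, mul_assoc]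

theorem BraidRel.commute_pow_three (hr : BraidRel r b) (hrs : Commute r s)
    (hsb : (s * b) ^ 2 = (b * s) ^ 2) : Commute ((r * s * b) ^ 3) r :=
  calc (r * s * b) ^ 3 * r
      = r * s * b * (r * s) * b * (r * s) * b * r := by
        simp only [pow_succ, pow_zero, one_mul, mul_assoc]
    _ = r * s * b * r * s * b * s * (r * b * r) := by
        nth_rw 3 [hrs.eq]; simp only [mul_assoc]
    _ = r * s * b * r * (s * b) ^ 2 * r * b := by rw [hr]; simp only [sq, mul_assoc]
    _ = r * s * (b * r * b) * s * b * (s * r) * b := by rw [hsb]; simp only [sq, mul_assoc]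
    _ = r * (s * r) * b * r * s * b * (s * r) * b := by rw [← hr]; simp only [mul_assoc]
    _ = r * (r * s * b) ^ 3 := by
        rw [← hrs.eq]; simp only [pow_succ, pow_zero, one_mul, mul_assoc]

theorem BraidRel.commute_mul_mul_mul_pow_three (hr : BraidRel r b) (hp : BraidRel p b)
    (hq : BraidRel q b) (hrp : Commute r p) (hrq : Commute r q) (hpq : Commute p q) :
    Commute ((r * p * q * b) ^ 3) r := by
  rw [mul_assoc r p q]
  refine hr.commute_pow_three (hrp.mul_right hrq) ?_
  rw [hp.sq_mul_mul_eq hq hpq]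

end Braid

namespace AD4

open PresentedGroup

theorem commute_of_castSucc (i j : Fin 3) :
    Commute (of i.castSucc : AD4) (of j.castSucc) := by
  have commute_of_lt {i j : Fin 3} (hij : i < j) :
      Commute (of i.castSucc : AD4) (of j.castSucc) :=
    mk_eq_mk_of_mul_inv_mem <| by fin_cases i <;> fin_cases j <;> simp_all [AD4rels]
  rcases lt_trichotomy i j with hij | rfl | hij
  · exact commute_of_lt hij
  · exact Commute.refl _
  · exact (commute_of_lt hij).symm

theorem braidRel_of_castSucc (i : Fin 3) : BraidRel (of i.castSucc : AD4) (of 3) :=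
  mk_eq_mk_of_mul_inv_mem <| by fin_cases i <;> simp [AD4rels]

theorem commute_Δ_of_castSucc (i : Fin 3) : Commute Δ (of i.castSucc) := by
  have commute_of_eq (i j k : Fin 3)
      (hΔ : Δ = (of i.castSucc * of j.castSucc * of k.castSucc * of 3) ^ 3) :
      Commute Δ (of i.castSucc) :=
    hΔ ▸ (braidRel_of_castSucc i).commute_mul_mul_mul_pow_three (braidRel_of_castSucc j)
      (braidRel_of_castSucc k) (commute_of_castSucc i j) (commute_of_castSucc i k)
      (commute_of_castSucc j k)
  have comm_zero_one : (of 0 * of 1 : AD4) = of 1 * of 0 := commute_of_castSucc 0 1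
  have comm_mul_two : (of 0 * of 1 * of 2 : AD4) = of 2 * of 0 * of 1 := by
    rw [mul_assoc (of 2)]
    exact (commute_of_castSucc 0 2).mul_left (commute_of_castSucc 1 2)
  fin_cases i
  · exact commute_of_eq 0 1 2 rfl
  · exact commute_of_eq 1 0 2 (by rw [Δ, comm_zero_one]; rfl)
  · exact commute_of_eq 2 0 1 (by rw [Δ, comm_mul_two]; rfl)

theorem commute_Δ_of_three : Commute Δ (of 3) := by
  have commute_legs : Commute Δ (of 0 * of 1 * of 2) :=
    ((commute_Δ_of_castSucc 0).mul_right (commute_Δ_of_castSucc 1)).mul_right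
      (commute_Δ_of_castSucc 2)
  have commute_coxeter : Commute Δ (of 0 * of 1 * of 2 * of 3) := Commute.pow_self _ 3
  simpa only [inv_mul_cancel_left] using commute_legs.inv_right.mul_right commute_coxeter

theorem Δ_mem_center : Δ ∈ Subgroup.center AD4 := by
  refine Subgroup.mem_center_iff.mpr fun g ↦ Subgroup.mem_centralizer_singleton_iff.mp <|
    generated_by _ (Subgroup.centralizer {Δ}) (fun i ↦ ?_) g
  rw [Subgroup.mem_centralizer_singleton_iff]
  exact i.lastCases commute_Δ_of_three.symm.eq fun i ↦ (commute_Δ_of_castSucc i).symm.eq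

end AD4

section Twist

variable {G H K : Type*} [Group G] [Group H] [Group K]

/-- The homomorphism `(g, h) ↦ (g * (ψ h)⁻¹, π h)`: the automorphism of `G × H` that straightens
the graph of `ψ` into the factor `H`, followed by `π` on that factor. The map `ψ` takes central
values so that this is multiplicative. -/
def untwist (ψ : H →* Subgroup.center G) (π : H →* K) : G × H →* G × K where
  toFun x := (x.1 * (ψ x.2 : G)⁻¹, π x.2)
  map_one' := by simp
  map_mul' x y := by
    have hψ : y.1 * (ψ y.2 : G)⁻¹ * (ψ x.2 : G)⁻¹ = (ψ x.2 : G)⁻¹ * (y.1 * (ψ y.2 : G)⁻¹) :=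
      Subgroup.mem_center_iff.mp (ψ x.2)⁻¹.2 _
    ext
    · simp only [Prod.fst_mul, Prod.snd_mul, map_mul, Subgroup.coe_mul, mul_inv_rev, mul_assoc]
        at hψ ⊢
      rw [hψ]
    · exact map_mul π x.2 y.2

theorem untwist_apply (ψ : H →* Subgroup.center G) (π : H →* K) (x : G × H) :
    untwist ψ π x = (x.1 * (ψ x.2 : G)⁻¹, π x.2) :=
  rfl

theorem untwist_surjective (ψ : H →* Subgroup.center G) {π : H →* K}
    (hπ : Function.Surjective π) : Function.Surjective (untwist ψ π) := by
  rintro ⟨g, k⟩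
  obtain ⟨h, rfl⟩ := hπ k
  exact ⟨(g * ψ h, h), by rw [untwist_apply, mul_inv_cancel_right]⟩

theorem ker_untwist (ψ : H →* Subgroup.center G) {π : H →* K} {S : Set H}
    (hS : π.ker = Subgroup.normalClosure S) :
    (untwist ψ π).ker = Subgroup.normalClosure ((fun h ↦ ((ψ h : G), h)) '' S) := by
  let graph : H →* G × H := ((Subgroup.center G).subtype.comp ψ).prod (MonoidHom.id H)
  have graph_mem {h : H} (hh : π h = 1) : graph h ∈ Subgroup.normalClosure (graph '' S) :=
    Subgroup.comap_normalClosure_image_ge S graph (hS ▸ hh : h ∈ Subgroup.normalClosure S)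
  apply le_antisymm
  · rintro ⟨g, h⟩ hgh
    obtain ⟨hg, hh⟩ : g * (ψ h : G)⁻¹ = 1 ∧ π h = 1 := Prod.mk_eq_one.mp hgh
    obtain rfl : g = ψ h := mul_inv_eq_one.mp hg
    exact graph_mem hh
  · refine Subgroup.normalClosure_le_normal ?_
    rintro _ ⟨h, hh, rfl⟩
    have hπ : h ∈ π.ker := hS ▸ Subgroup.subset_normalClosure hh
    exact Prod.mk_eq_one.mpr ⟨mul_inv_cancel _, hπ⟩

end Twist

section IntPlane

/-- The homomorphism `ℤ² → ℤ` reading off the `i`-th coordinate, written multiplicatively. -/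
def coord (i : Fin 2) : Multiplicative (Fin 2 → ℤ) →* Multiplicative ℤ :=
  AddMonoidHom.toMultiplicative (Pi.evalAddMonoidHom _ i)

theorem coord_u_mul_u (i : Fin 2) : coord i (u 0 * u 1) = Multiplicative.ofAdd 1 := by
  fin_cases i <;> rfl

theorem coord_div_coord_surjective : Function.Surjective (coord 1 / coord 0) := fun n ↦
  ⟨Multiplicative.ofAdd (Pi.single 1 n.toAdd), by simp [coord]⟩

theorem ker_coord_div_coord :
    (coord 1 / coord 0).ker = Subgroup.normalClosure {u 0 * u 1} := by
  apply le_antisymm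
  · intro v hv
    have coord_eq : coord 1 v = coord 0 v := div_eq_one.mp hv
    have toAdd_eq : v.toAdd 1 = v.toAdd 0 := congrArg Multiplicative.toAdd coord_eq
    have hv_zpow : v = (u 0 * u 1) ^ v.toAdd 0 := by
      apply Multiplicative.toAdd.injective
      funext i
      fin_cases i <;> simp [u, toAdd_eq]
    rw [hv_zpow]
    exact zpow_mem (Subgroup.subset_normalClosure (Set.mem_singleton _)) _
  · refine Subgroup.normalClosure_le_normal (Set.singleton_subset_iff.mpr ?_)
    rw [SetLike.mem_coe, MonoidHom.mem_ker, MonoidHom.div_apply, coord_u_mul_u, coord_u_mul_u,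
      div_self']

end IntPlane

theorem stmt_13_general {G : Type*} [Group G] {z : G} (hz : z ∈ Subgroup.center G) :
    Nonempty ((G × Multiplicative (Fin 2 → ℤ)) ⧸ Subgroup.normalClosure {(z⁻¹, u 0 * u 1)} ≃*
      G × Multiplicative ℤ) := by
  let ψ : Multiplicative (Fin 2 → ℤ) →* Subgroup.center G :=
    (zpowersHom _ ⟨z⁻¹, inv_mem hz⟩).comp (coord 0)
  have hψ : (ψ (u 0 * u 1) : G) = z⁻¹ := by
    simp [ψ, coord_u_mul_u]
  have hker : (untwist ψ (coord 1 / coord 0)).ker =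
      Subgroup.normalClosure {(z⁻¹, u 0 * u 1)} := by
    rw [ker_untwist ψ ker_coord_div_coord, Set.image_singleton, hψ]
  exact ⟨(QuotientGroup.quotientMulEquivOfEq hker.symm).trans
    (QuotientGroup.quotientKerEquivOfSurjective _
      (untwist_surjective ψ coord_div_coord_surjective))⟩

/-- Corollary 9: `(A(D₄) × ℤ²)` modulo the relation `u₁ u₂ = (a1 a2 a3 b)^3` is isomorphic
to `A(D₄) × ℤ` (the algebraic content of `PMod(1,2,1) ≅ A(D₄) × ℤ`). -/
theorem stmt_13 :
    Nonempty ((AD4 × Multiplicative (Fin 2 → ℤ)) ⧸ N ≃* AD4 × Multiplicative ℤ) :=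
  stmt_13_general AD4.Δ_mem_center
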